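/- For every infinite ordinal α there exists a simple quasi-polyadic equality set algebra of dimension α, namely the subalgebra A_1 of C generated by the two elements a_0 and a_1, which is generated by two elements but is not generated by any single element: for every x ∈ A_1, the subalgebra of C generated by {x} is not equal to A_1. -/

import Mathlib

/- Formalization of quasi-polyadic equality set algebras over the weak space
   `V = {s : α → ℚ | s i ≠ 0 for finitely many i}`, where the infinite ordinal α
   is formalized as an infinite type. -/

open scoped Classical

namespace QPEA

variable {α : Type*}

/-- The weak space `V = ^αℚ^(0)`: functions with finite support. -/
def W (α : Type*) : Set (α → ℚ) := {s | {i | s i ≠ 0}.Finite}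

/-- Cylindrification `c_i`. -/
def cyl (i : α) (X : Set (α → ℚ)) : Set (α → ℚ) :=
  {s | s ∈ W α ∧ ∃ t ∈ X, ∀ j, j ≠ i → t j = s j}

/-- Diagonal element `d_ij`. -/
def diag (i j : α) : Set (α → ℚ) := {s | s ∈ W α ∧ s i = s j}

/-- Transposition substitution `s_[i,j]`. -/
noncomputable def sub (i j : α) (X : Set (α → ℚ)) : Set (α → ℚ) :=
  {s | s ∈ W α ∧ (s ∘ Equiv.swap i j) ∈ X}

/-- Membership in the subalgebra of the full quasi-polyadic equality set algebra `C`
    (with unit `V = W α`) generated by `S`. -/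
inductive SgMem (S : Set (Set (α → ℚ))) : Set (α → ℚ) → Prop
  | base {x : Set (α → ℚ)} : x ∈ S → SgMem S x
  | empty : SgMem S ∅
  | top : SgMem S (W α)
  | dgnl (i j : α) : SgMem S (diag i j)
  | union {x y : Set (α → ℚ)} : SgMem S x → SgMem S y → SgMem S (x ∪ y)
  | compl {x : Set (α → ℚ)} : SgMem S x → SgMem S (W α \ x)
  | cylin (i : α) {x : Set (α → ℚ)} : SgMem S x → SgMem S (cyl i x)
  | subst (i j : α) {x : Set (α → ℚ)} : SgMem S x → SgMem S (sub i j x)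

/-- The subalgebra `Sg^C S` of `C` generated by `S`. -/
def Sg (S : Set (Set (α → ℚ))) : Set (Set (α → ℚ)) := {x | SgMem S x}

/-- The element `[t, r] = {s ∈ V | t = Σ_i r_i s_i}`. -/
noncomputable def poly (t : ℚ) (r : α → ℚ) : Set (α → ℚ) :=
  {s | s ∈ W α ∧ t = ∑ᶠ i, r i * s i}

/-- `a_m = [m, 1]` where `1` is the constantly-one sequence. -/
noncomputable def aElem (m : ℕ) : Set (α → ℚ) := poly (m : ℚ) (fun _ => 1)

/-- `r ∈ ^αℚ^(0) ∪ ^αℚ^(1)`. -/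
def weak01 (r : α → ℚ) : Prop := {i | r i ≠ 0}.Finite ∨ {i | r i ≠ 1}.Finite

/-- `Pol = {[t,r] : r ∈ ^αℚ^(0) ∪ ^αℚ^(1)}`. -/
def Pol (α : Type*) : Set (Set (α → ℚ)) :=
  {X | ∃ t r, weak01 r ∧ X = poly t r}

/-- `Po = {[t,r] ∈ Pol : 0 ∈ range r} ∪ {d_ij : i ≠ j}`. -/
def Po (α : Type*) : Set (Set (α → ℚ)) :=
  {X | ∃ t r, weak01 r ∧ (∃ i, r i = 0) ∧ X = poly t r} ∪
    {X | ∃ i j : α, i ≠ j ∧ X = diag i j}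

/-- `Pof = {[t, 1] : t ∈ ℚ}`. -/
def Pof (α : Type*) : Set (Set (α → ℚ)) := {X | ∃ t : ℚ, X = poly t (fun _ => 1)}

/-- `X^S = {s_[i,j] x : x ∈ X, i, j < α}`. -/
def sClose (X : Set (Set (α → ℚ))) : Set (Set (α → ℚ)) :=
  {y | ∃ x ∈ X, ∃ i j : α, y = sub i j x}

/-- `X*`: finite intersections of elements of `X` and complements (rel. `V`) of
    elements of `X` (the empty intersection being `V`). -/
def star (X : Set (Set (α → ℚ))) : Set (Set (α → ℚ)) :=
  {p | ∃ (n : ℕ) (f : Fin n → Set (α → ℚ)),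
      (∀ i, f i ∈ X ∨ ∃ q ∈ X, f i = W α \ q) ∧ p = W α ∩ ⋂ i, f i}

/-- `X**`: finite unions of elements of `X*` (the empty union being `∅`);
    the Boolean subalgebra of `℘(V)` generated by `X`. -/
def dstar (X : Set (Set (α → ℚ))) : Set (Set (α → ℚ)) :=
  {p | ∃ (n : ℕ) (f : Fin n → Set (α → ℚ)), (∀ i, f i ∈ star X) ∧ p = ⋃ i, f i}

/-- `G(Y) = (Y^S ∪ Po)**`. -/
def G (Y : Set (Set (α → ℚ))) : Set (Set (α → ℚ)) := dstar (sClose Y ∪ Po α)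

/-- `Poz`: elements of `G(Pol)` covered by finitely many elements of `Po`. -/
def Poz (α : Type*) : Set (Set (α → ℚ)) :=
  {x | x ∈ G (Pol α) ∧
    ∃ (n : ℕ) (p : Fin n → Set (α → ℚ)), (∀ i, p i ∈ Po α) ∧ x ⊆ ⋃ i, p i}

/-- `Neg = G(∅) ∖ Poz`. -/
def Neg (α : Type*) : Set (Set (α → ℚ)) := G (∅ : Set (Set (α → ℚ))) \ Poz α

/-- An ideal of a subalgebra `B` of `C`: a nonempty subset of `B`, downward closed
    in `B`, closed under `∪`, and closed under the operations `c_i` and `s_[i,j]`. -/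
def IsIdeal (B I : Set (Set (α → ℚ))) : Prop :=
  I.Nonempty ∧ I ⊆ B ∧
    (∀ x ∈ I, ∀ y ∈ B, y ⊆ x → y ∈ I) ∧
    (∀ x ∈ I, ∀ y ∈ I, x ∪ y ∈ I) ∧
    (∀ x ∈ I, ∀ i : α, cyl i x ∈ I) ∧
    (∀ x ∈ I, ∀ i j : α, sub i j x ∈ I)

/-- `B` is simple: every ideal of `B` equals `{∅}` or all of `B`. -/
def Simple (B : Set (Set (α → ℚ))) : Prop :=
  ∀ I : Set (Set (α → ℚ)), IsIdeal B I → I = {∅} ∨ I = B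

/-- A subuniverse of `C`: contains `∅`, `V`, all diagonals, and is closed under
    `∪`, complement relative to `V`, all `c_i` and all `s_[i,j]`. -/
def IsSubuniv (B : Set (Set (α → ℚ))) : Prop :=
  (∅ : Set (α → ℚ)) ∈ B ∧ W α ∈ B ∧ (∀ i j : α, diag i j ∈ B) ∧
    (∀ x ∈ B, ∀ y ∈ B, x ∪ y ∈ B) ∧
    (∀ x ∈ B, W α \ x ∈ B) ∧
    (∀ i : α, ∀ x ∈ B, cyl i x ∈ B) ∧
    (∀ i j : α, ∀ x ∈ B, sub i j x ∈ B)

end QPEA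

open QPEA


/-!
Every element of the algebra generated by the `a_m` depends only on finitely many coordinates and
on the coordinate sum. A change of the sum can be absorbed by one further coordinate, so finitely
many cylindrifications turn a nonempty element into the unit, and the algebra is simple.

By linear elimination every element is a finite Boolean combination of affine hyperplanes, so it
contains either almost all or almost no points of each hyperplane `Σ_i s_i = k`. For a cylinder the
answer does not depend on `k`, and all other operations determine the answer at `k` from those of
their arguments at the same `k`. Hence if no generator separates the values `k` and `l` in this
sense, then no element generated by them does. But `a_k` separates `k` from every other value, while
`n` generators split the values into at most `2 ^ n` classes.
-/

namespace QPEA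

open Filter

section AffineGeometry

variable {K V : Type*} [Field K] [AddCommGroup V] [Module K V]

lemma affineMap_add_smul (f : V →ᵃ[K] K) (s e : V) (c : K) :
    f (s + c • e) = f s + c * f.linear e := by
  rw [add_comm s, ← vadd_eq_add, f.map_vadd, map_smul, vadd_eq_add, smul_eq_mul, add_comm]

/-- Two points lie on the same hyperplanes `f = 0`, `f ∈ F`. -/
def Agree (F : Set (V →ᵃ[K] K)) (s t : V) : Prop :=
  ∀ f ∈ F, f s = 0 ↔ f t = 0

lemma Agree.symm {F : Set (V →ᵃ[K] K)} {s t : V} (h : Agree F s t) : Agree F t s :=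
  fun f hf => (h f hf).symm

lemma Agree.mono {F F' : Set (V →ᵃ[K] K)} {s t : V} (h : Agree F' s t) (hF : F ⊆ F') :
    Agree F s t :=
  fun f hf => h f (hF hf)

/-- The combination of two affine functions in which direction `e` is eliminated. -/
def resolvent (e : V) (f g : V →ᵃ[K] K) : V →ᵃ[K] K :=
  f.linear e • g - g.linear e • f

lemma resolvent_add_smul (e : V) (f g : V →ᵃ[K] K) (s : V) (c : K) :
    resolvent e f g (s + c • e) = resolvent e f g s := by
  simp only [resolvent, AffineMap.coe_sub, AffineMap.coe_smul, Pi.sub_apply, Pi.smul_apply,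
    AffineMap.sub_linear, AffineMap.smul_linear, LinearMap.sub_apply, LinearMap.smul_apply,
    affineMap_add_smul, smul_eq_mul]
  ring

lemma resolvent_eq_zero_iff {e s : V} {f : V →ᵃ[K] K} (hfe : f.linear e ≠ 0) (hfs : f s = 0)
    (g : V →ᵃ[K] K) : resolvent e f g s = 0 ↔ g s = 0 := by
  simp [resolvent, hfe, hfs]

/-- Affine functions whose vanishing at `s` and `t` controls that of the members of `F` along the
lines through `s` and `t` in direction `e`. -/
def eliminants (e : V) (F : Set (V →ᵃ[K] K)) : Set (V →ᵃ[K] K) :=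
  F ∪ Set.image2 (resolvent e) F F

lemma exists_agree_add_smul [Infinite K] {F : Set (V →ᵃ[K] K)} (hF : F.Finite) {e s t : V}
    (h : Agree (eliminants e F) s t) (c : K) : ∃ c' : K, Agree F (s + c • e) (t + c' • e) := by
  by_cases hroot : ∃ f ∈ F, f.linear e ≠ 0 ∧ f (s + c • e) = 0
  · obtain ⟨f, hf, hfe, hfs⟩ := hroot
    have hft : f (t + (-f t / f.linear e) • e) = 0 := by
      rw [affineMap_add_smul]
      field_simp
      ring
    refine ⟨-f t / f.linear e, fun g hg => ?_⟩
    rw [← resolvent_eq_zero_iff hfe hfs g, ← resolvent_eq_zero_iff hfe hft g,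
      resolvent_add_smul, resolvent_add_smul]
    exact h _ (.inr ⟨f, hf, g, hg, rfl⟩)
  · push Not at hroot
    obtain ⟨c', hc'⟩ := (hF.image fun f => -f t / f.linear e).exists_notMem
    refine ⟨c', fun g hg => ?_⟩
    by_cases hge : g.linear e = 0
    · simpa [affineMap_add_smul, hge] using h g (.inl hg)
    · refine iff_of_false (hroot g hg hge) fun hgt => hc' ⟨g, hg, ?_⟩
      rw [affineMap_add_smul] at hgt
      field_simp
      linear_combination -hgt

/-- The union of the lines in direction `e` that meet `y`. -/
def cylinder (K : Type*) {V : Type*} [Field K] [AddCommGroup V] [Module K V] (e : V)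
    (y : Set V) : Set V :=
  {s | ∃ c : K, s + c • e ∈ y}

lemma mem_cylinder {e s : V} {y : Set V} : s ∈ cylinder K e y ↔ ∃ c : K, s + c • e ∈ y :=
  Iff.rfl

lemma add_smul_mem_cylinder_iff {e s : V} {y : Set V} (a : K) :
    s + a • e ∈ cylinder K e y ↔ s ∈ cylinder K e y := by
  simp only [mem_cylinder, add_assoc, ← add_smul]
  exact (Equiv.addLeft a).exists_congr_left.trans (by simp)

/-- A set is affinely constructible if membership in it is decided by finitely many affine
equations, i.e. if it is a finite Boolean combination of affine hyperplanes. -/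
def AffineConstructible (K : Type*) {V : Type*} [Field K] [AddCommGroup V] [Module K V]
    (y : Set V) : Prop :=
  ∃ F : Set (V →ᵃ[K] K), F.Finite ∧ ∀ s t, Agree F s t → (s ∈ y ↔ t ∈ y)

namespace AffineConstructible

variable {x y : Set V}

lemma empty : AffineConstructible K (∅ : Set V) :=
  ⟨∅, Set.finite_empty, fun _ _ _ => Iff.rfl⟩

lemma hyperplane (f : V →ᵃ[K] K) : AffineConstructible K {s | f s = 0} :=
  ⟨{f}, Set.finite_singleton f, fun _ _ h => h f rfl⟩

lemma compl (hy : AffineConstructible K y) : AffineConstructible K yᶜ :=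
  let ⟨F, hF, h⟩ := hy
  ⟨F, hF, fun s t hst => not_congr (h s t hst)⟩

lemma union (hx : AffineConstructible K x) (hy : AffineConstructible K y) :
    AffineConstructible K (x ∪ y) :=
  let ⟨F, hF, hx⟩ := hx
  let ⟨F', hF', hy⟩ := hy
  ⟨F ∪ F', hF.union hF', fun s t hst => or_congr (hx s t (hst.mono Set.subset_union_left))
    (hy s t (hst.mono Set.subset_union_right))⟩

lemma preimage {V' : Type*} [AddCommGroup V'] [Module K V'] (hy : AffineConstructible K y)
    (A : V' →ᵃ[K] V) : AffineConstructible K (A ⁻¹' y) :=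
  let ⟨F, hF, h⟩ := hy
  ⟨(·.comp A) '' F, hF.image _, fun s t hst =>
    h (A s) (A t) fun f hf => hst (f.comp A) (Set.mem_image_of_mem _ hf)⟩

protected lemma cylinder [Infinite K] (hy : AffineConstructible K y) (e : V) :
    AffineConstructible K (cylinder K e y) := by
  obtain ⟨F, hF, h⟩ := hy
  have transfer : ∀ s t, Agree (eliminants e F) s t →
      s ∈ cylinder K e y → t ∈ cylinder K e y := by
    rintro s t hst ⟨c, hc⟩
    obtain ⟨c', hc'⟩ := exists_agree_add_smul hF hst c
    exact ⟨c', (h _ _ hc').1 hc⟩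
  exact ⟨eliminants e F, hF.union (hF.image2 _ hF), fun s t hst =>
    ⟨transfer s t hst, transfer t s hst.symm⟩⟩

end AffineConstructible

/-- The filter of generic points of the affine hyperplane `τ = k`: it is generated by the
complements in it of the hyperplanes `f = 0` not parallel to it. -/
def genericOn (τ : Module.Dual K V) (k : K) : Filter V :=
  𝓟 {s | τ s = k} ⊓
    ⨅ f : {f : V →ᵃ[K] K // ¬ LinearMap.ker τ ≤ LinearMap.ker f.linear}, 𝓟 {s | f.1 s ≠ 0}

variable {τ : Module.Dual K V}

lemma eventually_genericOn_apply_eq (τ : Module.Dual K V) (k : K) :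
    ∀ᶠ s in genericOn τ k, τ s = k :=
  mem_inf_of_left (mem_principal_self _)

lemma eventually_genericOn_ne_zero {f : V →ᵃ[K] K}
    (hf : ¬ LinearMap.ker τ ≤ LinearMap.ker f.linear) (k : K) :
    ∀ᶠ s in genericOn τ k, f s ≠ 0 :=
  mem_inf_of_right <| mem_iInf_of_mem ⟨f, hf⟩ (mem_principal_self _)

lemma exists_apply_eq_and_forall_ne_zero [Infinite K] (hτ : τ ≠ 0) (k : K)
    {F : Set (V →ᵃ[K] K)} (hF : F.Finite)
    (hker : ∀ f ∈ F, ¬ LinearMap.ker τ ≤ LinearMap.ker f.linear) :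
    ∃ s, τ s = k ∧ ∀ f ∈ F, f s ≠ 0 := by
  have := hF.to_subtype
  obtain ⟨s, hs⟩ := LinearMap.surjective hτ k
  obtain ⟨v, hv, hFv⟩ := Module.Dual.exists_forall_mem_ne_zero_of_forall_exists (LinearMap.ker τ)
    (fun f : F => f.1.linear) fun f => SetLike.not_le_iff_exists.1 (hker f f.2)
  obtain ⟨c, hc⟩ := (hF.image fun f => -f s / f.linear v).exists_notMem
  refine ⟨s + c • v, by simp [hs, LinearMap.mem_ker.1 hv], fun f hf hfs => hc ⟨f, hf, ?_⟩⟩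
  rw [affineMap_add_smul] at hfs
  have hfv : f.linear v ≠ 0 := hFv ⟨f, hf⟩
  field_simp
  linear_combination -hfs

lemma genericOn_neBot [Infinite K] (hτ : τ ≠ 0) (k : K) : (genericOn τ k).NeBot := by
  rw [genericOn, ((hasBasis_iInf_principal_finite _).principal_inf _).neBot_iff]
  intro I hI
  obtain ⟨s, hs, hsI⟩ := exists_apply_eq_and_forall_ne_zero hτ k (hI.image Subtype.val)
    (by rintro _ ⟨f, -, rfl⟩; exact f.2)
  exact ⟨s, hs, Set.mem_iInter₂.2 fun f hf => hsI f (Set.mem_image_of_mem _ hf)⟩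

lemma tendsto_genericOn (A : V ≃ᵃ[K] V) {c : K} (hA : ∀ s, τ (A s) = τ s + c) (k : K) :
    Tendsto A (genericOn τ k) (genericOn τ (k + c)) := by
  refine tendsto_inf.2 ⟨tendsto_principal.2 ?_, tendsto_iInf.2 fun ⟨f, hf⟩ =>
    tendsto_principal.2 (eventually_genericOn_ne_zero (f := f.comp A.toAffineMap) ?_ k)⟩
  · filter_upwards [eventually_genericOn_apply_eq τ k] with s hs
    exact (hA s).trans (congrArg (· + c) hs)
  · have hτA : ∀ v, τ (A.linear v) = τ v := fun v => by
      have hAv := congrArg τ (A.map_vadd 0 v)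
      simp only [vadd_eq_add, add_zero, map_add, hA, map_zero, zero_add] at hAv
      linear_combination -hAv
    obtain ⟨v, hv, hfv⟩ := SetLike.not_le_iff_exists.1 hf
    refine SetLike.not_le_iff_exists.2 ⟨A.linear.symm v, ?_, ?_⟩
    · rwa [LinearMap.mem_ker, ← hτA, A.linear.apply_symm_apply]
    · simpa using hfv

lemma map_genericOn (A : V ≃ᵃ[K] V) {c : K} (hA : ∀ s, τ (A s) = τ s + c) (k : K) :
    map A (genericOn τ k) = genericOn τ (k + c) := by
  have hsymm : Tendsto A.symm (genericOn τ (k + c)) (genericOn τ k) := by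
    simpa using tendsto_genericOn A.symm (c := -c)
      (fun s => by simp [← sub_eq_add_neg, eq_sub_iff_add_eq, ← hA]) (k + c)
  exact map_eq_of_inverse A.symm (funext A.apply_symm_apply) (tendsto_genericOn A hA k) hsymm

lemma apply_eq_of_ker_le_ker_linear {f : V →ᵃ[K] K}
    (hf : LinearMap.ker τ ≤ LinearMap.ker f.linear) {s t : V} (hst : τ s = τ t) : f s = f t := by
  have hmem : s - t ∈ LinearMap.ker f.linear := hf (by simp [hst])
  rwa [LinearMap.mem_ker, ← vsub_eq_sub s t, f.linearMap_vsub, vsub_eq_sub, sub_eq_zero] at hmem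

namespace AffineConstructible

variable {x y : Set V}

lemma eventually_or (hy : AffineConstructible K y) (τ : Module.Dual K V) (k : K) :
    (∀ᶠ s in genericOn τ k, s ∈ y) ∨ ∀ᶠ s in genericOn τ k, s ∉ y := by
  obtain ⟨F, hF, hFy⟩ := hy
  set F' := {f ∈ F | ¬ LinearMap.ker τ ≤ LinearMap.ker f.linear}
  set E : Set V := {s | τ s = k ∧ ∀ f ∈ F', f s ≠ 0}
  have hE : ∀ᶠ s in genericOn τ k, s ∈ E :=
    (eventually_genericOn_apply_eq τ k).and <| (eventually_all_finite (hF.sep _)).2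
      fun f hf => eventually_genericOn_ne_zero hf.2 k
  have hagree : ∀ s ∈ E, ∀ t ∈ E, Agree F s t := by
    rintro s ⟨hs, hsF⟩ t ⟨ht, htF⟩ f hf
    by_cases hker : LinearMap.ker τ ≤ LinearMap.ker f.linear
    · rw [apply_eq_of_ker_le_ker_linear hker (hs.trans ht.symm)]
    · exact iff_of_false (hsF f ⟨hf, hker⟩) (htF f ⟨hf, hker⟩)
  by_cases hmeet : ∃ s ∈ E, s ∈ y
  · obtain ⟨s, hs, hsy⟩ := hmeet
    exact .inl <| hE.mono fun t ht => (hFy s t (hagree s hs t ht)).1 hsy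
  · push Not at hmeet
    exact .inr <| hE.mono hmeet

lemma eventually_union_iff (hx : AffineConstructible K x) (τ : Module.Dual K V) (k : K) :
    (∀ᶠ s in genericOn τ k, s ∈ x ∪ y) ↔
      (∀ᶠ s in genericOn τ k, s ∈ x) ∨ ∀ᶠ s in genericOn τ k, s ∈ y := by
  refine ⟨fun h => ?_, fun h => h.elim (·.mono fun _ => .inl) (·.mono fun _ => .inr)⟩
  exact (hx.eventually_or τ k).imp_right fun hxc =>
    (h.and hxc).mono fun s hs => hs.1.resolve_left hs.2

lemma eventually_compl_iff [Infinite K] (hy : AffineConstructible K y) (hτ : τ ≠ 0) (k : K) :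
    (∀ᶠ s in genericOn τ k, s ∈ yᶜ) ↔ ¬ ∀ᶠ s in genericOn τ k, s ∈ y := by
  have := genericOn_neBot hτ k
  refine ⟨fun hc h => ?_, (hy.eventually_or τ k).resolve_left⟩
  obtain ⟨s, hs, hsc⟩ := (h.and hc).exists
  exact hsc hs

end AffineConstructible

end AffineGeometry

section WeakSpace

variable {α : Type*}

/-- The trace of `y` on the weak space, whose elements are encoded as finitely supported
functions. -/
def points (y : Set (α → ℚ)) : Set (α →₀ ℚ) := (⇑) ⁻¹' y

/-- The linear functional `s ↦ Σ_i s_i`. -/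
noncomputable def coordSum (α : Type*) : Module.Dual ℚ (α →₀ ℚ) :=
  Finsupp.linearCombination ℚ fun _ => 1

@[simp]
lemma coordSum_single (i : α) (c : ℚ) : coordSum α (Finsupp.single i c) = c := by
  simp [coordSum]

lemma coordSum_eq_finsum (s : α →₀ ℚ) : coordSum α s = ∑ᶠ i, s i := by
  rw [finsum_eq_sum_of_support_subset (s := s.support) s (by simp)]
  simp [coordSum, Finsupp.linearCombination_apply, Finsupp.sum]

lemma coordSum_domLCongr (e : α ≃ α) (s : α →₀ ℚ) :
    coordSum α (Finsupp.domLCongr (R := ℚ) e s) = coordSum α s := by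
  simp [coordSum, Finsupp.linearCombination_equivMapDomain, Function.comp_def]

lemma coordSum_ne_zero [Nonempty α] : coordSum α ≠ 0 := fun h => by
  simpa using LinearMap.congr_fun h (Finsupp.single (Classical.arbitrary α) 1)

lemma coe_mem_W (s : α →₀ ℚ) : ⇑s ∈ W α := s.hasFiniteSupport

lemma exists_finsupp_coe_eq {s : α → ℚ} (hs : s ∈ W α) : ∃ t : α →₀ ℚ, ⇑t = s :=
  ⟨Finsupp.ofSupportFinite s hs, rfl⟩

@[simp]
lemma points_empty : points (∅ : Set (α → ℚ)) = ∅ := rfl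

@[simp]
lemma points_W : points (W α) = Set.univ := Set.eq_univ_of_forall coe_mem_W

@[simp]
lemma points_union (x y : Set (α → ℚ)) : points (x ∪ y) = points x ∪ points y := rfl

@[simp]
lemma points_compl (y : Set (α → ℚ)) : points (W α \ y) = (points y)ᶜ := by
  ext s
  exact and_iff_right (coe_mem_W s)

lemma points_diag (i j : α) : points (diag i j) = {s | s i = s j} := by
  ext s
  exact and_iff_right (coe_mem_W s)

lemma points_cyl (i : α) (y : Set (α → ℚ)) :
    points (cyl i y) = cylinder ℚ (Finsupp.single i 1) (points y) := by
  ext s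
  constructor
  · rintro ⟨-, t, ht, hts⟩
    refine ⟨t i - s i, ?_⟩
    suffices hst : ⇑(s + (t i - s i) • Finsupp.single i (1 : ℚ)) = t by
      rwa [points, Set.mem_preimage, hst]
    ext j
    obtain rfl | hj := eq_or_ne j i
    · simp
    · simp [hts j hj, hj.symm]
  · rintro ⟨c, hc⟩
    exact ⟨coe_mem_W s, _, hc, fun j hj => by simp [hj.symm]⟩

lemma points_sub (i j : α) (y : Set (α → ℚ)) :
    points (sub i j y) = Finsupp.domLCongr (R := ℚ) (Equiv.swap i j) ⁻¹' points y := by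
  ext s
  exact and_iff_right (coe_mem_W s)

lemma points_aElem (m : ℕ) : points (aElem m : Set (α → ℚ)) = {s | coordSum α s = m} := by
  ext s
  simp [points, aElem, poly, coe_mem_W, coordSum_eq_finsum, eq_comm]

lemma SgMem.subset_W {S : Set (Set (α → ℚ))} (hS : ∀ x ∈ S, x ⊆ W α) {y : Set (α → ℚ)}
    (hy : SgMem S y) : y ⊆ W α := by
  induction hy with
  | base hx => exact hS _ hx
  | empty => exact Set.empty_subset _
  | top => exact subset_rfl
  | union _ _ ihx ihy => exact Set.union_subset ihx ihy
  | compl => exact Set.sdiff_subset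
  | dgnl | cylin | subst => exact fun _ hs => hs.1

lemma aElem_subset_W (m : ℕ) : (aElem m : Set (α → ℚ)) ⊆ W α := fun _ hs => hs.1

end WeakSpace

section Simplicity

variable {α : Type*}

/-- Membership in `y` depends only on the coordinate sum and on the coordinates in `Γ`. -/
def InvariantOff (Γ : Finset α) (y : Set (α → ℚ)) : Prop :=
  ∀ d : α →₀ ℚ, coordSum α d = 0 → (∀ i ∈ Γ, d i = 0) →
    ∀ s, s + d ∈ points y ↔ s ∈ points y

lemma InvariantOff.mono {Γ Δ : Finset α} {y : Set (α → ℚ)} (hy : InvariantOff Γ y) (h : Γ ⊆ Δ) :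
    InvariantOff Δ y :=
  fun d hd hdΔ => hy d hd fun i hi => hdΔ i (h hi)

lemma SgMem.exists_invariantOff {S : Set (Set (α → ℚ))}
    (hS : ∀ x ∈ S, ∃ Γ, InvariantOff Γ x) {y : Set (α → ℚ)} (hy : SgMem S y) :
    ∃ Γ, InvariantOff Γ y := by
  induction hy with
  | base hx => exact hS _ hx
  | empty => exact ⟨∅, by simp [InvariantOff]⟩
  | top => exact ⟨∅, by simp [InvariantOff]⟩
  | dgnl i j =>
    refine ⟨{i, j}, fun d _ hd s => ?_⟩
    simp [points_diag, hd i, hd j]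
  | union _ _ ihx ihy =>
    obtain ⟨Γ, hx⟩ := ihx
    obtain ⟨Δ, hy⟩ := ihy
    exact ⟨Γ ∪ Δ, fun d hd hdΓ s => or_congr
      (hx.mono Finset.subset_union_left d hd hdΓ s) (hy.mono Finset.subset_union_right d hd hdΓ s)⟩
  | compl _ ih =>
    obtain ⟨Γ, hy⟩ := ih
    exact ⟨Γ, fun d hd hdΓ s => by simpa using not_congr (hy d hd hdΓ s)⟩
  | cylin i _ ih =>
    obtain ⟨Γ, hy⟩ := ih
    refine ⟨Γ, fun d hd hdΓ s => ?_⟩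
    simp only [points_cyl, mem_cylinder, add_right_comm s d, hy d hd hdΓ]
  | subst i j _ ih =>
    obtain ⟨Γ, hy⟩ := ih
    refine ⟨Γ.image (Equiv.swap i j), fun d hd hdΓ s => ?_⟩
    rw [points_sub, Set.mem_preimage, map_add]
    exact hy (Finsupp.domLCongr (R := ℚ) (Equiv.swap i j) d) ((coordSum_domLCongr _ d).trans hd)
      (fun k hk => hdΓ (Equiv.swap i j k) (Finset.mem_image_of_mem _ hk)) _

lemma invariantOff_aElem (m : ℕ) : InvariantOff (∅ : Finset α) (aElem m) := fun d hd _ s => by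
  simp [points_aElem, hd]

lemma exists_finset_forall_exists_add_eq (Γ : Finset α) : ∃ Δ : Finset α, ∀ d : α →₀ ℚ,
    ∃ d₁ d₂, d₁ + d₂ = d ∧ (coordSum α d₁ = 0 ∧ ∀ i ∈ Γ, d₁ i = 0) ∧ ∀ i ∉ Δ, d₂ i = 0 := by
  by_cases hΓ : ∀ k, k ∈ Γ
  · exact ⟨Γ, fun d => ⟨0, d, zero_add d, by simp, fun i hi => absurd (hΓ i) hi⟩⟩
  · push Not at hΓ
    obtain ⟨k, hk⟩ := hΓ
    refine ⟨insert k Γ, fun d => ?_⟩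
    -- The coordinate `k` absorbs the sum of the coordinates outside `Γ`.
    set d' := d.filter (· ∉ Γ)
    set c := Finsupp.single k (coordSum α d')
    refine ⟨d' - c, d.filter (· ∈ Γ) + c, ?_, ⟨by simp [c], fun i hi => ?_⟩, fun i hi => ?_⟩
    · rw [sub_add_add_cancel, add_comm, Finsupp.filter_add_filter_not]
    · have hki : k ≠ i := by rintro rfl; exact hk hi
      simp [d', c, hi, hki]
    · simp only [Finset.mem_insert, not_or] at hi
      simp [c, hi.2, Ne.symm hi.1]

lemma IsIdeal.exists_forall_add_mem {B I : Set (Set (α → ℚ))} (hI : IsIdeal B I) {x : Set (α → ℚ)}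
    (hx : x ∈ I) (Δ : Finset α) :
    ∃ z ∈ I, ∀ s ∈ points x, ∀ d : α →₀ ℚ, (∀ i ∉ Δ, d i = 0) → s + d ∈ points z := by
  obtain ⟨-, -, -, -, hcyl, -⟩ := hI
  induction Δ using Finset.induction_on with
  | empty =>
    refine ⟨x, hx, fun s hs d hd => ?_⟩
    rwa [show d = 0 from Finsupp.ext fun i => hd i (Finset.notMem_empty i), add_zero]
  | insert i Δ _ ih =>
    obtain ⟨z, hz, hxz⟩ := ih
    refine ⟨cyl i z, hcyl z hz i, fun s hs d hd => ?_⟩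
    rw [points_cyl]
    refine ⟨-d i, ?_⟩
    rw [add_assoc]
    refine hxz s hs _ fun j hj => ?_
    obtain rfl | hji := eq_or_ne j i
    · simp
    · simp [hd j (by simp [hji, hj]), hji.symm]

lemma IsIdeal.W_subset_of_invariantOff {B I : Set (Set (α → ℚ))} (hI : IsIdeal B I)
    {x : Set (α → ℚ)} (hx : x ∈ I) (hne : (points x).Nonempty) {Γ : Finset α}
    (hΓ : InvariantOff Γ x) : ∃ z ∈ I, W α ⊆ z := by
  obtain ⟨Δ, hΔ⟩ := exists_finset_forall_exists_add_eq Γ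
  obtain ⟨z, hz, hxz⟩ := hI.exists_forall_add_mem hx Δ
  obtain ⟨u, hu⟩ := hne
  refine ⟨z, hz, fun s hs => ?_⟩
  obtain ⟨s, rfl⟩ := exists_finsupp_coe_eq hs
  obtain ⟨d₁, d₂, hd, ⟨hd₁, hd₁Γ⟩, hd₂⟩ := hΔ (s - u)
  have hs : u + d₁ + d₂ = s := by rw [add_assoc, hd, add_sub_cancel]
  exact hs ▸ hxz (u + d₁) ((hΓ d₁ hd₁ hd₁Γ u).2 hu) d₂ hd₂

lemma simple_of_forall_exists_invariantOff {B : Set (Set (α → ℚ))} (hW : ∀ y ∈ B, y ⊆ W α)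
    (hB : ∀ y ∈ B, ∃ Γ, InvariantOff Γ y) : Simple B := by
  intro I hI
  obtain ⟨hIne, hIB, hdown, -⟩ := id hI
  by_cases hne : ∃ x ∈ I, x.Nonempty
  · right
    obtain ⟨x, hx, u, hu⟩ := hne
    obtain ⟨u, rfl⟩ := exists_finsupp_coe_eq (hW x (hIB hx) hu)
    obtain ⟨Γ, hΓ⟩ := hB x (hIB hx)
    obtain ⟨z, hz, hWz⟩ := hI.W_subset_of_invariantOff hx ⟨u, hu⟩ hΓ
    exact hIB.antisymm fun y hy => hdown z hz y hy ((hW y hy).trans hWz)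
  · left
    push Not at hne
    exact hIne.subset_singleton_iff.1 hne

lemma simple_Sg_image_aElem (T : Set ℕ) : Simple (Sg (aElem '' T) : Set (Set (α → ℚ))) := by
  refine simple_of_forall_exists_invariantOff (fun y hy => SgMem.subset_W ?_ hy)
    fun y hy => SgMem.exists_invariantOff ?_ hy
  · rintro _ ⟨m, -, rfl⟩
    exact aElem_subset_W m
  · rintro _ ⟨m, -, rfl⟩
    exact ⟨∅, invariantOff_aElem m⟩

end Simplicity

section Generation

variable {α : Type*}

lemma affineConstructible_diag (i j : α) : AffineConstructible ℚ (points (diag i j)) := by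
  convert! AffineConstructible.hyperplane (Finsupp.lapply i - Finsupp.lapply j :
    (α →₀ ℚ) →ₗ[ℚ] ℚ).toAffineMap
  simp [points_diag, sub_eq_zero]

lemma affineConstructible_aElem (m : ℕ) :
    AffineConstructible ℚ (points (aElem m : Set (α → ℚ))) := by
  convert! AffineConstructible.hyperplane
    ((coordSum α).toAffineMap - AffineMap.const ℚ (α →₀ ℚ) (m : ℚ))
  simp [points_aElem, sub_eq_zero]

lemma SgMem.affineConstructible {S : Set (Set (α → ℚ))}
    (hS : ∀ x ∈ S, AffineConstructible ℚ (points x)) {y : Set (α → ℚ)} (hy : SgMem S y) :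
    AffineConstructible ℚ (points y) := by
  induction hy with
  | base hx => exact hS _ hx
  | empty => exact .empty
  | top => simpa using AffineConstructible.empty.compl
  | dgnl i j => exact affineConstructible_diag i j
  | union _ _ ihx ihy => exact ihx.union ihy
  | compl _ ih => simpa using ih.compl
  | cylin i _ ih => simpa only [points_cyl] using ih.cylinder (Finsupp.single i 1)
  | subst i j _ ih =>
    rw [points_sub]
    exact ih.preimage (Finsupp.domLCongr (R := ℚ) (Equiv.swap i j)).toAffineEquiv.toAffineMap

/-- Almost all points with coordinate sum `k`, in the sense of `genericOn`, lie in `y`. -/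
def HoldsGenerically (k : ℚ) (y : Set (α → ℚ)) : Prop :=
  ∀ᶠ s in genericOn (coordSum α) k, s ∈ points y

lemma not_holdsGenerically_empty [Nonempty α] (k : ℚ) :
    ¬ HoldsGenerically k (∅ : Set (α → ℚ)) := by
  have := genericOn_neBot (coordSum_ne_zero (α := α)) k
  simpa [HoldsGenerically] using this.ne

lemma holdsGenerically_aElem_iff [Nonempty α] (k : ℚ) (m : ℕ) :
    HoldsGenerically k (aElem m : Set (α → ℚ)) ↔ k = m := by
  have := genericOn_neBot (coordSum_ne_zero (α := α)) k
  have hmem : ∀ᶠ s in genericOn (coordSum α) k, s ∈ points (aElem m) ↔ k = m :=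
    (eventually_genericOn_apply_eq _ k).mono fun s hs => by simp [points_aElem, hs]
  rw [HoldsGenerically, eventually_congr hmem, eventually_const]

lemma not_holdsGenerically_diag {i j : α} (hij : i ≠ j) (k : ℚ) :
    ¬ HoldsGenerically k (diag i j) := by
  have : Nonempty α := ⟨i⟩
  have := genericOn_neBot (coordSum_ne_zero (α := α)) k
  set f : (α →₀ ℚ) →ₗ[ℚ] ℚ := Finsupp.lapply i - Finsupp.lapply j
  have hf : ¬ LinearMap.ker (coordSum α) ≤ LinearMap.ker f.toAffineMap.linear :=
    SetLike.not_le_iff_exists.2 ⟨Finsupp.single i 1 - Finsupp.single j 1, by simp,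
      by simp [f, hij, hij.symm]⟩
  intro h
  obtain ⟨s, hs, hsf⟩ := (h.and (eventually_genericOn_ne_zero hf k)).exists
  rw [points_diag] at hs
  exact hsf (sub_eq_zero.2 hs)

lemma holdsGenerically_union_iff {x y : Set (α → ℚ)} (hx : AffineConstructible ℚ (points x))
    (k : ℚ) : HoldsGenerically k (x ∪ y) ↔ HoldsGenerically k x ∨ HoldsGenerically k y := by
  rw [HoldsGenerically, points_union, hx.eventually_union_iff, HoldsGenerically, HoldsGenerically]

lemma holdsGenerically_compl_iff [Nonempty α] {y : Set (α → ℚ)}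
    (hy : AffineConstructible ℚ (points y)) (k : ℚ) :
    HoldsGenerically k (W α \ y) ↔ ¬ HoldsGenerically k y := by
  rw [HoldsGenerically, points_compl, hy.eventually_compl_iff coordSum_ne_zero, HoldsGenerically]

/-- A cylinder is invariant under translations in its direction, and these move the hyperplanes
of constant coordinate sum onto one another. -/
lemma holdsGenerically_cyl_iff (i : α) (y : Set (α → ℚ)) (k l : ℚ) :
    HoldsGenerically k (cyl i y) ↔ HoldsGenerically l (cyl i y) := by
  have hmap := map_genericOn (τ := coordSum α) (c := l - k)
    (AffineEquiv.constVAdd ℚ _ ((l - k) • Finsupp.single i 1)) (fun s => by simp [add_comm]) k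
  rw [add_sub_cancel] at hmap
  rw [HoldsGenerically, HoldsGenerically, ← hmap, eventually_map]
  simp only [AffineEquiv.constVAdd_apply, vadd_eq_add, points_cyl, add_comm _ (_ : α →₀ ℚ),
    add_smul_mem_cylinder_iff]

lemma holdsGenerically_sub_iff (i j : α) (y : Set (α → ℚ)) (k : ℚ) :
    HoldsGenerically k (sub i j y) ↔ HoldsGenerically k y := by
  have hmap := map_genericOn (τ := coordSum α)
    (Finsupp.domLCongr (R := ℚ) (Equiv.swap i j)).toAffineEquiv (c := 0)
    (fun s => by simpa using coordSum_domLCongr _ s) k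
  rw [add_zero] at hmap
  rw [HoldsGenerically, points_sub, HoldsGenerically]
  nth_rw 2 [← hmap]
  rfl

lemma SgMem.holdsGenerically_iff [Nonempty α] {S : Set (Set (α → ℚ))}
    (hS : ∀ x ∈ S, AffineConstructible ℚ (points x)) {k l : ℚ}
    (hkl : ∀ x ∈ S, HoldsGenerically k x ↔ HoldsGenerically l x) {y : Set (α → ℚ)}
    (hy : SgMem S y) : HoldsGenerically k y ↔ HoldsGenerically l y := by
  induction hy with
  | base hx => exact hkl _ hx
  | empty => simp [not_holdsGenerically_empty]
  | top => simp [HoldsGenerically]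
  | dgnl i j =>
    obtain rfl | hij := eq_or_ne i j
    · simp [HoldsGenerically, points_diag]
    · simp [not_holdsGenerically_diag hij]
  | union hx _ ihx ihy =>
    simp only [holdsGenerically_union_iff (hx.affineConstructible hS), ihx, ihy]
  | compl hy ih => simp only [holdsGenerically_compl_iff (hy.affineConstructible hS), ih]
  | cylin i => exact holdsGenerically_cyl_iff i _ k l
  | subst i j _ ih => simpa only [holdsGenerically_sub_iff] using ih

lemma exists_ne_forall_holdsGenerically_iff {S : Finset (Set (α → ℚ))} {T : Finset ℕ}
    (hST : 2 ^ S.card ≤ T.card) : ∃ m ∈ T, ∃ k : ℕ, k ≠ m ∧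
      ∀ x ∈ S, HoldsGenerically k x ↔ HoldsGenerically m x := by
  obtain ⟨n, hn⟩ := Infinite.exists_notMem_finset T
  have hcard : S.powerset.card < (insert n T).card := by
    rw [Finset.card_powerset, Finset.card_insert_of_notMem hn]
    lia
  obtain ⟨k, hk, l, hl, hkl, hS⟩ := Finset.exists_ne_map_eq_of_card_lt_of_maps_to hcard
    (f := fun k : ℕ => S.filter (HoldsGenerically (k : ℚ)))
    fun k _ => Finset.mem_coe.2 (Finset.mem_powerset.2 (Finset.filter_subset _ _))
  have hS : ∀ x ∈ S, HoldsGenerically (k : ℚ) x ↔ HoldsGenerically (l : ℚ) x :=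
    Finset.filter_inj'.1 hS
  rcases Finset.mem_insert.1 hl with rfl | hl
  · exact ⟨k, Finset.mem_of_mem_insert_of_ne hk hkl, l, hkl.symm, fun x hx => (hS x hx).symm⟩
  · exact ⟨l, hl, k, hkl, hS⟩

lemma Sg_ne_Sg_image_aElem [Nonempty α] {S : Finset (Set (α → ℚ))} {T : Finset ℕ}
    (hST : 2 ^ S.card ≤ T.card) : Sg (S : Set (Set (α → ℚ))) ≠ Sg (aElem '' (T : Set ℕ)) := by
  intro hgen
  have hS : ∀ x ∈ S, AffineConstructible ℚ (points x) := fun x hx =>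
    SgMem.affineConstructible (by rintro _ ⟨m, -, rfl⟩; exact affineConstructible_aElem m)
      (hgen.subset (SgMem.base hx) : x ∈ Sg (aElem '' (T : Set ℕ)))
  obtain ⟨m, hm, k, hkm, hS_iff⟩ := exists_ne_forall_holdsGenerically_iff hST
  have haElem : SgMem (S : Set (Set (α → ℚ))) (aElem m) :=
    hgen.superset (SgMem.base (Set.mem_image_of_mem _ hm))
  have hiff := haElem.holdsGenerically_iff hS hS_iff
  simp only [holdsGenerically_aElem_iff, iff_true, Nat.cast_inj] at hiff
  exact hkm hiff

end Generation

end QPEA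

theorem stmt2_general {α : Type*} [Nonempty α] (T : Finset ℕ) :
    Simple (Sg (aElem '' (T : Set ℕ)) : Set (Set (α → ℚ))) ∧
    ∀ S : Finset (Set (α → ℚ)), 2 ^ S.card ≤ T.card →
      Sg (S : Set (Set (α → ℚ))) ≠ Sg (aElem '' (T : Set ℕ)) :=
  ⟨simple_Sg_image_aElem T, fun _ => Sg_ne_Sg_image_aElem⟩

/-- The subalgebra `A_1` of `C` generated by the two elements `a_0, a_1`
is a simple quasi-polyadic equality set algebra (of infinite dimension) which is
generated by two elements but not by any single element. -/
theorem stmt2 {α : Type*} [Infinite α] :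
    Simple (Sg {aElem 0, aElem 1} : Set (Set (α → ℚ))) ∧
    ∀ x ∈ (Sg {aElem 0, aElem 1} : Set (Set (α → ℚ))),
      Sg {x} ≠ (Sg {aElem 0, aElem 1} : Set (Set (α → ℚ))) := by
  obtain ⟨hsimple, hgen⟩ := stmt2_general (α := α) {0, 1}
  exact ⟨by simpa [Set.image_pair] using hsimple,
    fun x _ => by simpa [Set.image_pair] using hgen {x} (by simp)⟩
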